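/- arXiv:2211.10783 — 2 statements merged into one kernel-verified Lean document; each statement's English description precedes it below -/
import Mathlib

section
/- Let d ≥ 1, γ > 0, and let f : ℝ^d → ℝ be M-Lipschitz continuous. Let f_γ(x) := E[f(x + γ·ẽ)], where ẽ is uniformly distributed on the Euclidean unit ball B₂^d(1). Then f_γ is differentiable at every x ∈ ℝ^d with gradient ∇f_γ(x) = E_e[(d/γ)·f(x + γe)·e], where e is uniformly distributed on the Euclidean unit sphere S₂^d(1). -/
open MeasureTheory
open scoped ENNReal RealInnerProductSpace

noncomputable section

/-- The `l_p` norm on `EuclideanSpace ℝ (Fin d)` (with `p = ∞` giving the sup norm). -/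
def lpNorm {d : ℕ} (p : ℝ≥0∞) (x : EuclideanSpace ℝ (Fin d)) : ℝ :=
  if p = ∞ then ⨆ i, |x i| else (∑ i, |x i| ^ p.toReal) ^ (1 / p.toReal)

/-- The unit `l₁`-ball `B₁^d(1)`. -/
def l1Ball (d : ℕ) : Set (EuclideanSpace ℝ (Fin d)) := {u | ∑ i, |u i| ≤ 1}

/-- The Euclidean unit ball `B₂^d(1)`. -/
def l2Ball (d : ℕ) : Set (EuclideanSpace ℝ (Fin d)) := {u | ‖u‖ ≤ 1}

/-- The unit `l₁`-sphere `S₁^d(1)`. -/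
def l1Sphere (d : ℕ) : Set (EuclideanSpace ℝ (Fin d)) := {u | ∑ i, |u i| = 1}

/-- The Euclidean unit sphere `S₂^d(1)`. -/
def l2Sphere (d : ℕ) : Set (EuclideanSpace ℝ (Fin d)) := {u | ‖u‖ = 1}

/-- Uniform probability distribution on a solid body: normalized Lebesgue measure. -/
def uniformOn {d : ℕ} (S : Set (EuclideanSpace ℝ (Fin d))) :
    Measure (EuclideanSpace ℝ (Fin d)) :=
  (volume S)⁻¹ • volume.restrict S

/-- Uniform probability distribution on a hypersurface: normalized `(d-1)`-dimensional
Hausdorff measure. -/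
def uniformOnSphere {d : ℕ} (S : Set (EuclideanSpace ℝ (Fin d))) :
    Measure (EuclideanSpace ℝ (Fin d)) :=
  (μH[(d : ℝ) - 1] S)⁻¹ • (μH[(d : ℝ) - 1]).restrict S

/-- Coordinatewise sign vector `sign(e)`. -/
def signVec {d : ℕ} (e : EuclideanSpace ℝ (Fin d)) : EuclideanSpace ℝ (Fin d) :=
  (WithLp.equiv 2 (Fin d → ℝ)).symm (fun i => Real.sign (e i))

end


section HausdorffPart
open Metric Set Module

variable {E : Type*} [NormedAddCommGroup E] [InnerProductSpace ℝ E] [FiniteDimensional ℝ E]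
  [MeasurableSpace E] [BorelSpace E]

lemma aux_half_finite (v : E) (hv : ‖v‖ = 1) (n : ℕ) (hn : finrank ℝ E = n + 1) :
    μH[(n : ℝ)] {x : E | ‖x‖ = 1 ∧ ⟪v, x⟫ ≤ 0} < ∞ := by
  have hv0 : v ≠ 0 := by rintro rfl; simp at hv
  have : Fact (finrank ℝ E = n + 1) := ⟨hn⟩
  have hdim : finrank ℝ (ℝ ∙ v)ᗮ = n := Submodule.finrank_orthogonal_span_singleton hv0
  have hc : ContDiff ℝ 1 (fun w : (ℝ ∙ v)ᗮ => stereoInvFunAux v (w : E)) :=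
    contDiff_stereoInvFunAux.comp (ℝ ∙ v)ᗮ.subtypeL.contDiff
  obtain ⟨K, hK⟩ := hc.contDiffOn.exists_lipschitzOnWith (s := closedBall 0 2) (by simp)
    (convex_closedBall _ _) (isCompact_closedBall _ _)
  have hle := hK.hausdorffMeasure_image_le (d := (n : ℝ)) (by positivity)
  have hfin : μH[(n : ℝ)] (closedBall (0 : (ℝ ∙ v)ᗮ) 2) < ∞ := by
    rw [← hdim]
    exact (isCompact_closedBall _ _).measure_lt_top
  refine lt_of_le_of_lt (le_trans (measure_mono ?_) hle) (ENNReal.mul_lt_top (by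
    rw [ENNReal.rpow_natCast]; exact ENNReal.pow_lt_top ENNReal.coe_lt_top) hfin)
  rintro x ⟨hx, hvx⟩
  have hxv : x ≠ v := by
    rintro rfl
    rw [real_inner_self_eq_norm_sq, hv] at hvx
    norm_num at hvx
  refine ⟨stereoToFun v x, ?_, ?_⟩
  · rw [mem_closedBall_zero_iff, stereoToFun_apply, norm_smul, innerSL_apply_apply]
    have h1 : ‖(ℝ ∙ v)ᗮ.orthogonalProjectionOnto x‖ ≤ 1 :=
      hx ▸ (ℝ ∙ v)ᗮ.norm_orthogonalProjectionOnto_apply_le x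
    have h2 : ‖2 / (1 - ⟪v, x⟫)‖ ≤ 2 := by
      rw [Real.norm_of_nonneg (by apply div_nonneg <;> linarith)]
      rw [div_le_iff₀ (by linarith)]
      linarith
    calc _ ≤ (2 : ℝ) * 1 := by gcongr
      _ = 2 := by norm_num
  · have := congrArg Subtype.val (stereo_left_inv hv (x := ⟨x, by simpa using hx⟩) hxv)
    exact this

lemma aux_sphere_finite (n : ℕ) (hn : finrank ℝ E = n + 1) :
    μH[(n : ℝ)] (sphere (0 : E) 1) < ∞ := by
  have : Nontrivial E := Module.nontrivial_of_finrank_pos (R := ℝ) (by omega)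
  obtain ⟨v, hv⟩ := exists_norm_eq E (zero_le_one)
  refine lt_of_le_of_lt (measure_mono ?_) (measure_union_lt_top (aux_half_finite v hv n hn)
    (aux_half_finite (-v) (by simpa using hv) n hn))
  intro x hx
  rw [mem_sphere_zero_iff_norm] at hx
  rcases le_total ⟪v, x⟫ 0 with h | h
  · exact Or.inl ⟨hx, h⟩
  · exact Or.inr ⟨hx, by rw [inner_neg_left]; linarith⟩

lemma aux_sphere_pos (n : ℕ) (hn : finrank ℝ E = n + 1) :
    0 < μH[(n : ℝ)] (sphere (0 : E) 1) := by
  have : Nontrivial E := Module.nontrivial_of_finrank_pos (R := ℝ) (by omega)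
  obtain ⟨v, hv⟩ := exists_norm_eq E (zero_le_one)
  have hv0 : v ≠ 0 := by rintro rfl; simp at hv
  have : Fact (finrank ℝ E = n + 1) := ⟨hn⟩
  have hdim : finrank ℝ (ℝ ∙ v)ᗮ = n := Submodule.finrank_orthogonal_span_singleton hv0
  have hle := (ℝ ∙ v)ᗮ.lipschitzWith_orthogonalProjectionOnto.hausdorffMeasure_image_le
    (d := (n : ℝ)) (by positivity) (sphere (0 : E) 1)
  have hpos : 0 < μH[(n : ℝ)] (ball (0 : (ℝ ∙ v)ᗮ) 1) := by
    rw [← hdim]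
    exact measure_ball_pos _ _ one_pos
  simp only [ENNReal.coe_one, ENNReal.one_rpow, one_mul] at hle
  refine lt_of_lt_of_le hpos (le_trans (measure_mono ?_) hle)
  intro w hw
  rw [mem_ball_zero_iff] at hw
  have hvw : ⟪(w : E), v⟫ = 0 := Submodule.mem_orthogonal_singleton_iff_inner_left.mp w.2
  refine ⟨(w : E) + Real.sqrt (1 - ‖w‖ ^ 2) • v, ?_, ?_⟩
  · rw [mem_sphere_zero_iff_norm, ← sq_eq_sq₀ (norm_nonneg _) zero_le_one, norm_add_sq_real,
      inner_smul_right, hvw, norm_smul, hv, Real.norm_of_nonneg (Real.sqrt_nonneg _), mul_one,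
      Real.sq_sqrt (by nlinarith [norm_nonneg w])]
    simp
  · rw [map_add, map_smul, Submodule.orthogonalProjectionOnto_orthogonalComplement_singleton_eq_zero,
      Submodule.orthogonalProjectionOnto_mem_subspace_eq_self]
    simp

/-- Uniformly distributed probability measures on the sphere agree. -/
lemma aux_le (P Q : Measure E) [IsProbabilityMeasure P] [IsProbabilityMeasure Q]
    (hPS : ∀ᵐ x ∂P, x ∈ sphere (0 : E) 1) (hQS : ∀ᵐ x ∂Q, x ∈ sphere (0 : E) 1)
    (hP : ∀ x ∈ sphere (0 : E) 1, ∀ y ∈ sphere (0 : E) 1, ∀ r, P (ball x r) = P (ball y r))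
    (hQ : ∀ x ∈ sphere (0 : E) 1, ∀ y ∈ sphere (0 : E) 1, ∀ r, Q (ball x r) = Q (ball y r))
    (F : Set E) (hF : IsClosed F) : P F ≤ Q F := by
  obtain ⟨x₀, hx₀⟩ := hPS.exists
  -- a Fubini identity
  have key : ∀ A B : Set E, MeasurableSet A → MeasurableSet B → ∀ r,
      ∫⁻ x in A, Q (B ∩ ball x r) ∂P = ∫⁻ y in B, P (A ∩ ball y r) ∂Q := by
    intro A B hA hB r
    have hM : MeasurableSet {p : E × E | dist p.2 p.1 < r} :=
      (isOpen_lt (by fun_prop) (by fun_prop)).measurableSet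
    have h1 : (P.restrict A).prod (Q.restrict B) {p : E × E | dist p.2 p.1 < r}
        = ∫⁻ x in A, Q (B ∩ ball x r) ∂P := by
      rw [Measure.prod_apply hM]
      refine lintegral_congr fun x => ?_
      have : Prod.mk x ⁻¹' {p : E × E | dist p.2 p.1 < r} = ball x r := by
        ext; simp
      rw [this, Measure.restrict_apply measurableSet_ball, inter_comm]
    have h2 : (P.restrict A).prod (Q.restrict B) {p : E × E | dist p.2 p.1 < r}
        = ∫⁻ y in B, P (A ∩ ball y r) ∂Q := by
      rw [Measure.prod_apply_symm hM]
      refine lintegral_congr fun x => ?_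
      have : (fun y => (y, x)) ⁻¹' {p : E × E | dist p.2 p.1 < r} = ball x r := by
        ext; simp [dist_comm]
      rw [this, Measure.restrict_apply measurableSet_ball, inter_comm]
    rw [← h1, h2]
  have hEq : ∀ r, P (ball x₀ r) = Q (ball x₀ r) := by
    intro r
    have := key univ univ .univ .univ r
    simp only [Measure.restrict_univ, univ_inter] at this
    rw [lintegral_congr_ae (g := fun _ => Q (ball x₀ r)) (hPS.mono fun x hx => hQ x hx x₀ hx₀ r),
      lintegral_congr_ae (g := fun _ => P (ball x₀ r)) (hQS.mono fun x hx => hP x hx x₀ hx₀ r)]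
      at this
    simpa using this.symm
  have hpos : ∀ r, 0 < r → P (ball x₀ r) ≠ 0 := by
    intro r hr
    have hS : P (sphere (0 : E) 1) ≠ 0 := by
      rw [(prob_compl_eq_zero_iff isClosed_sphere.measurableSet).1 hPS]; simp
    obtain ⟨x, hx, h⟩ := exists_mem_forall_mem_nhdsWithin_pos_measure hS
    rw [hP x₀ hx₀ x hx r]
    exact (h _ (mem_nhdsWithin_of_mem_nhds (ball_mem_nhds _ hr))).ne'
  have hth : ∀ r, 0 < r → P F ≤ Q (thickening r F) := by
    intro r hr
    have h := key F (thickening r F) hF.measurableSet isOpen_thickening.measurableSet r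
    have h1 : ∫⁻ x in F, Q (thickening r F ∩ ball x r) ∂P = Q (ball x₀ r) * P F := by
      rw [← setLIntegral_const]
      refine setLIntegral_congr_fun_ae hF.measurableSet (hPS.mono fun x hx hxF => ?_)
      rw [inter_eq_right.2 (ball_subset_thickening hxF r), hQ x hx x₀ hx₀]
    have h2 : ∫⁻ y in thickening r F, P (F ∩ ball y r) ∂Q ≤ P (ball x₀ r) * Q (thickening r F) := by
      rw [← setLIntegral_const]
      refine lintegral_mono_ae (ae_restrict_of_ae (hQS.mono fun y hy => ?_))
      rw [hP x₀ hx₀ y hy]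
      exact measure_mono inter_subset_right
    rw [h1] at h
    rw [← h, hEq] at h2
    exact (ENNReal.mul_le_mul_iff_right (hEq r ▸ hpos r hr) (measure_ne_top _ _)).1 h2
  refine ge_of_tendsto (tendsto_measure_thickening_of_isClosed ⟨1, one_pos, measure_ne_top _ _⟩ hF) ?_
  filter_upwards [self_mem_nhdsWithin] with r hr using hth r hr

lemma aux_unique (P Q : Measure E) [IsProbabilityMeasure P] [IsProbabilityMeasure Q]
    (hPS : ∀ᵐ x ∂P, x ∈ sphere (0 : E) 1) (hQS : ∀ᵐ x ∂Q, x ∈ sphere (0 : E) 1)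
    (hP : ∀ x ∈ sphere (0 : E) 1, ∀ y ∈ sphere (0 : E) 1, ∀ r, P (ball x r) = P (ball y r))
    (hQ : ∀ x ∈ sphere (0 : E) 1, ∀ y ∈ sphere (0 : E) 1, ∀ r, Q (ball x r) = Q (ball y r)) :
    P = Q := by
  refine ext_of_generate_finite {s | IsClosed s} ?_ isPiSystem_isClosed ?_ (by simp)
  · rw [BorelSpace.measurable_eq (α := E), borel_eq_generateFrom_isClosed]
  · intro s hs
    exact le_antisymm (aux_le P Q hPS hQS hP hQ s hs) (aux_le Q P hQS hPS hQ hP s hs)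

lemma aux_image (L : E ≃ₗᵢ[ℝ] E) (x : E) (r : ℝ) :
    L '' (ball x r ∩ sphere (0 : E) 1) = ball (L x) r ∩ sphere (0 : E) 1 := by
  rw [image_inter L.injective, L.image_ball, L.image_sphere, map_zero]

lemma aux_hausdorff_ball (s : ℝ) (x y : E) (hx : x ∈ sphere (0 : E) 1) (hy : y ∈ sphere (0 : E) 1)
    (r : ℝ) : μH[s] (ball x r ∩ sphere (0 : E) 1) = μH[s] (ball y r ∩ sphere (0 : E) 1) := by
  rw [mem_sphere_zero_iff_norm] at hx hy
  have h := Submodule.reflection_sub (hx.trans hy.symm)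
  rw [← h, ← aux_image]
  exact ((Submodule.reflection (ℝ ∙ (x - y))ᗮ).toIsometryEquiv.hausdorffMeasure_image s _).symm

open scoped Pointwise in
lemma aux_toSphere_ball (x y : E) (hx : x ∈ sphere (0 : E) 1) (hy : y ∈ sphere (0 : E) 1)
    (r : ℝ) : (volume : Measure E).toSphere (Subtype.val ⁻¹' ball x r) =
      (volume : Measure E).toSphere (Subtype.val ⁻¹' ball y r) := by
  rw [mem_sphere_zero_iff_norm] at hx hy
  have h := Submodule.reflection_sub (hx.trans hy.symm)
  set L := (Submodule.reflection (ℝ ∙ (x - y))ᗮ)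
  rw [Measure.toSphere_apply' _ (measurable_subtype_coe measurableSet_ball),
    Measure.toSphere_apply' _ (measurable_subtype_coe measurableSet_ball),
    Subtype.image_preimage_coe, Subtype.image_preimage_coe, inter_comm, inter_comm _ (ball y r)]
  congr 1
  have : Ioo (0 : ℝ) 1 • (ball y r ∩ sphere (0 : E) 1)
      = L '' (Ioo (0 : ℝ) 1 • (ball x r ∩ sphere (0 : E) 1)) := by
    rw [← h, ← aux_image]
    ext z
    simp only [mem_smul, mem_image]
    constructor
    · rintro ⟨a, ha, _, ⟨b, hb, rfl⟩, rfl⟩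
      exact ⟨a • b, ⟨a, ha, b, hb, rfl⟩, by simp⟩
    · rintro ⟨_, ⟨a, ha, b, hb, rfl⟩, rfl⟩
      exact ⟨a, ha, L b, ⟨b, hb, rfl⟩, by simp⟩
  rw [this, L.image_eq_preimage_symm]
  exact (L.symm.measurePreserving.measure_preimage_emb
    L.symm.toHomeomorph.measurableEmbedding _).symm

end HausdorffPart

section PolarPart
open Metric Set Module

variable {E : Type*} [NormedAddCommGroup E] [InnerProductSpace ℝ E] [FiniteDimensional ℝ E]
  [MeasurableSpace E] [BorelSpace E]

lemma aux_polar [Nontrivial E] (F : E → ℝ) (hF : Integrable F) :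
    Integrable (fun e : sphere (0 : E) 1 =>
      ∫ r in Ioi (0 : ℝ), r ^ (finrank ℝ E - 1) * F (r • (e : E)))
      (volume : Measure E).toSphere ∧
    ∫ x, F x = ∫ e : sphere (0 : E) 1,
      (∫ r in Ioi (0 : ℝ), r ^ (finrank ℝ E - 1) * F (r • (e : E)))
      ∂(volume : Measure E).toSphere := by
  set n := finrank ℝ E - 1
  let G : sphere (0 : E) 1 × Ioi (0 : ℝ) → ℝ := fun p => F ((p.2 : ℝ) • (p.1 : E))
  have hG : ∀ x : ({(0 : E)}ᶜ : Set E), G (homeomorphUnitSphereProd E x) = F x := by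
    intro x
    have : ‖(x : E)‖ ≠ 0 := norm_ne_zero_iff.2 x.2
    simp [G, smul_smul, this]
  have hmp := (volume : Measure E).measurePreserving_homeomorphUnitSphereProd
  have hInt : Integrable G ((volume : Measure E).toSphere.prod (.volumeIoiPow n)) := by
    rw [← hmp.integrable_comp_emb (Homeomorph.measurableEmbedding _)]
    have : G ∘ (homeomorphUnitSphereProd E) = F ∘ Subtype.val := funext hG
    rw [this, ← integrableOn_iff_comap_subtypeVal (measurableSet_singleton _).compl]
    exact hF.integrableOn
  have hinner : ∀ e : sphere (0 : E) 1, ∫ r : Ioi (0 : ℝ), G (e, r) ∂(.volumeIoiPow n)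
      = ∫ r in Ioi (0 : ℝ), r ^ n * F (r • (e : E)) := by
    intro e
    simp only [Measure.volumeIoiPow, ENNReal.ofReal, G]
    rw [integral_withDensity_eq_integral_smul,
        integral_subtype_comap measurableSet_Ioi
          fun a : ℝ ↦ Real.toNNReal (a ^ n) • F (a • (e : E)),
        setIntegral_congr_fun measurableSet_Ioi fun x hx ↦ ?_]
    · simp only [NNReal.smul_def, Real.coe_toNNReal _ (pow_nonneg hx.out.le _), smul_eq_mul]
    · exact (measurable_subtype_coe.pow_const _).real_toNNReal
  constructor
  · simpa only [hinner] using hInt.integral_prod_left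
  · have h1 : ∫ x, F x = ∫ x : ({(0 : E)}ᶜ : Set E), F x ∂((volume : Measure E).comap (↑)) := by
      rw [integral_subtype_comap (measurableSet_singleton _).compl F,
        restrict_compl_singleton]
    rw [h1]
    simp only [← hG]
    rw [hmp.integral_comp (Homeomorph.measurableEmbedding _), integral_prod _ hInt]
    simp only [hinner]

/-- radial function of the unit ball centred at `y` -/
noncomputable def auxRho (e y : E) : ℝ := ⟪e, y⟫ + Real.sqrt (1 - ‖y‖ ^ 2 + ⟪e, y⟫ ^ 2)

lemma auxRho_pos (e y : E) (hy : ‖y‖ < 1) : 0 < auxRho e y := by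
  have h : |⟪e, y⟫| < Real.sqrt (1 - ‖y‖ ^ 2 + ⟪e, y⟫ ^ 2) := by
    apply Real.lt_sqrt_of_sq_lt
    rw [sq_abs]
    nlinarith [norm_nonneg y]
  unfold auxRho
  linarith [neg_abs_le ⟪e, y⟫]

lemma auxRho_mem (e y : E) (he : ‖e‖ = 1) (hy : ‖y‖ < 1) (r : ℝ) (hr : 0 < r) :
    r • e ∈ closedBall y 1 ↔ r ≤ auxRho e y := by
  have h : |⟪e, y⟫| < Real.sqrt (1 - ‖y‖ ^ 2 + ⟪e, y⟫ ^ 2) := by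
    apply Real.lt_sqrt_of_sq_lt
    rw [sq_abs]
    nlinarith [norm_nonneg y]
  have hs := Real.sq_sqrt (show 0 ≤ 1 - ‖y‖ ^ 2 + ⟪e, y⟫ ^ 2 by nlinarith [norm_nonneg y])
  have hn : ‖r • e - y‖ ^ 2 = r ^ 2 - 2 * r * ⟪e, y⟫ + ‖y‖ ^ 2 := by
    rw [norm_sub_sq_real, norm_smul, he, inner_smul_left, Real.norm_of_nonneg hr.le]
    simp
    ring
  rw [mem_closedBall, dist_eq_norm, ← sq_le_sq₀ (norm_nonneg _) zero_le_one, hn]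
  unfold auxRho
  set s := Real.sqrt (1 - ‖y‖ ^ 2 + ⟪e, y⟫ ^ 2)
  have h2 := le_abs_self ⟪e, y⟫
  constructor
  · intro h3
    have : |r - ⟪e, y⟫| ≤ s := abs_le_of_sq_le_sq (by nlinarith) (Real.sqrt_nonneg _)
    linarith [le_abs_self (r - ⟪e, y⟫)]
  · intro h3
    have : (r - ⟪e, y⟫) ^ 2 ≤ s ^ 2 := sq_le_sq' (by linarith) (by linarith)
    nlinarith

lemma auxRho_bound (e y : E) (he : ‖e‖ = 1) (hy : ‖y‖ < 1) : |auxRho e y - 1| ≤ ‖y‖ := by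
  have hp := auxRho_pos e y hy
  have h1 := (auxRho_mem e y he hy _ hp).2 le_rfl
  rw [mem_closedBall, dist_eq_norm] at h1
  have hn : ‖auxRho e y • e‖ = auxRho e y := by
    rw [norm_smul, he, Real.norm_of_nonneg hp.le, mul_one]
  have h2 := norm_le_norm_add_norm_sub' (auxRho e y • e) y
  have h3 : 1 - ‖y‖ ≤ auxRho e y := by
    rcases le_or_gt (1 - ‖y‖) 0 with h | h
    · linarith
    · refine (auxRho_mem e y he hy _ h).1 ?_
      rw [mem_closedBall, dist_eq_norm]
      refine (norm_sub_le _ _).trans ?_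
      rw [norm_smul, he, Real.norm_of_nonneg h.le]
      linarith
  rw [hn] at h2
  rw [abs_le]
  constructor <;> linarith

lemma auxRho_deriv (e : E) : HasFDerivAt (auxRho e) (innerSL ℝ e) 0 := by
  have h1 : HasFDerivAt (fun y : E => ⟪e, y⟫) (innerSL ℝ e) 0 := (innerSL ℝ e).hasFDerivAt
  have h0 : HasFDerivAt (fun w : E => ‖w‖ ^ 2) (0 : StrongDual ℝ E) 0 := by
    convert! (hasStrictFDerivAt_norm_sq (0 : E)).hasFDerivAt
    simp only [map_zero, smul_zero]
  have h2 := ((h0.const_sub 1).add (h1.pow 2)).sqrt (by simp)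
  have h3 := h1.add h2
  refine h3.congr_fderiv ?_
  ext; simp

lemma aux_main [Nontrivial E] (g : E → ℝ) (hg : Continuous g) :
    HasGradientAt (fun y => ∫ u in closedBall (0 : E) 1, g (y + u))
      (∫ e : sphere (0 : E) 1, g e • (e : E) ∂(volume : Measure E).toSphere) 0 := by
  set n := finrank ℝ E - 1
  let φ : sphere (0 : E) 1 → ℝ → ℝ := fun e r => r ^ n * g (r • (e : E))
  have hφ : ∀ e, Continuous (φ e) := fun e => by fun_prop
  let Φ : E → sphere (0 : E) 1 → ℝ := fun y e => ∫ r in (0)..(auxRho (e : E) y), φ e r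
  have hnorm : ∀ e : sphere (0 : E) 1, ‖(e : E)‖ = 1 := fun e => by simp
  have hpol : ∀ y : E, ‖y‖ < 1 → Integrable (Φ y) (volume : Measure E).toSphere ∧
      ∫ u in closedBall (0 : E) 1, g (y + u) = ∫ e, Φ y e ∂(volume : Measure E).toSphere := by
    intro y hy
    have hInt : Integrable ((closedBall y 1).indicator g) := by
      rw [integrable_indicator_iff measurableSet_closedBall]
      exact hg.continuousOn.integrableOn_compact (isCompact_closedBall _ _)
    have hin : ∀ e : sphere (0 : E) 1,
        ∫ r in Ioi (0 : ℝ), r ^ n * (closedBall y 1).indicator g (r • (e : E)) = Φ y e := by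
      intro e
      have hp := auxRho_pos (e : E) y hy
      simp only [Φ]
      rw [intervalIntegral.integral_of_le hp.le, ← Ioi_inter_Iic,
        ← setIntegral_indicator measurableSet_Iic]
      refine setIntegral_congr_fun measurableSet_Ioi fun r hr => ?_
      have := auxRho_mem (e : E) y (hnorm e) hy r hr
      by_cases h : r ≤ auxRho (e : E) y
      · simp [indicator, this.2 h, h, φ]
      · simp [indicator, mt this.1 h, h]
    have := aux_polar _ hInt
    simp only [hin, n] at this
    refine ⟨this.1, ?_⟩
    rw [← this.2, integral_indicator measurableSet_closedBall]
    have hmp := (measurePreserving_add_left (volume : Measure E) y)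
    have := hmp.setIntegral_preimage_emb (Homeomorph.addLeft y).measurableEmbedding g (closedBall y 1)
    rw [← this]
    congr 2
    ext z; simp
  obtain ⟨C, hC⟩ : ∃ C : ℝ, ∀ e : sphere (0 : E) 1, ∀ r ∈ Icc (0 : ℝ) 2, ‖φ e r‖ ≤ C := by
    have hc : Continuous fun p : sphere (0 : E) 1 × ℝ => p.2 ^ n * g (p.2 • (p.1 : E)) := by fun_prop
    obtain ⟨C, hC⟩ := (isCompact_univ.prod (isCompact_Icc (a := (0 : ℝ)) (b := 2))).exists_bound_of_continuousOn
      (hc.continuousOn)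
    exact ⟨C, fun e r hr => hC (e, r) ⟨mem_univ _, hr⟩⟩
  have hder := (hasFDerivAt_integral_of_dominated_loc_of_lip' (𝕜 := ℝ)
    (μ := (volume : Measure E).toSphere) (F := Φ) (x₀ := (0 : E)) (s := ball (0 : E) 1)
    (bound := fun _ => C)
    (F' := fun e => g e • innerSL ℝ (e : E)) (ball_mem_nhds _ one_pos)
    (fun y hy => (hpol y (by simpa using hy)).1.aestronglyMeasurable)
    (hpol 0 (by simp)).1
    (Continuous.aestronglyMeasurable (by fun_prop))
    (.of_forall fun e y hy => ?_) (integrable_const _) (.of_forall fun e => ?_))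
  rotate_left
  · have hy' : ‖y‖ < 1 := by simpa using hy
    have h1 : auxRho (e : E) 0 = 1 := by simp [auxRho]
    have hb := auxRho_bound (e : E) y (hnorm e) hy'
    simp only [Φ, h1, sub_zero]
    rw [intervalIntegral.integral_interval_sub_left ((hφ e).intervalIntegrable _ _)
      ((hφ e).intervalIntegrable _ _)]
    have hp := auxRho_pos (e : E) y hy'
    have hC0 : 0 ≤ C := (norm_nonneg _).trans (hC e 0 (by simp))
    refine (intervalIntegral.norm_integral_le_of_norm_le_const (C := C) fun r hr => ?_).trans ?_
    · refine hC e r ?_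
      have h2 : auxRho (e : E) y ≤ 2 := by linarith [le_abs_self (auxRho (e : E) y - 1)]
      have := uIoc_subset_uIcc hr
      exact (uIcc_subset_Icc (by constructor <;> norm_num) ⟨hp.le, h2⟩) this
    · gcongr
  · have h1 : auxRho (e : E) 0 = 1 := by simp [auxRho]
    have hd : HasDerivAt (fun u => ∫ r in (0)..u, φ e r) (φ e (auxRho (e : E) 0)) (auxRho (e : E) 0) :=
      intervalIntegral.integral_hasDerivAt_right ((hφ e).intervalIntegrable _ _)
        (hφ e).stronglyMeasurable.stronglyMeasurableAtFilter (hφ e).continuousAt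
    have := hd.comp_hasFDerivAt (0 : E) (auxRho_deriv (e : E))
    have h3 : φ e (auxRho (e : E) 0) = g e := by simp [φ, h1]
    rw [h3] at this
    exact this
  have hgi : Integrable (fun e : sphere (0 : E) 1 => g e • (e : E)) (volume : Measure E).toSphere := by
    rw [← integrableOn_univ]
    exact Continuous.continuousOn (by fun_prop) |>.integrableOn_compact isCompact_univ
  rw [hasGradientAt_iff_hasFDerivAt]
  have h2 := hder.2
  have heq : ∫ e : sphere (0 : E) 1, g e • innerSL ℝ (e : E) ∂(volume : Measure E).toSphere
      = InnerProductSpace.toDual ℝ E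
        (∫ e : sphere (0 : E) 1, g e • (e : E) ∂(volume : Measure E).toSphere) := by
    have := (innerSL ℝ (E := E)).integral_comp_comm hgi
    simp only [map_smul] at this
    rw [this]
    rfl
  rw [heq] at h2
  refine h2.congr_of_eventuallyEq ?_
  filter_upwards [ball_mem_nhds (0 : E) one_pos] with y hy
  exact (hpol y (by simpa using hy)).2

end PolarPart

lemma aux_uniform_eq {d : ℕ} (hd : 1 ≤ d) :
    uniformOnSphere (l2Sphere d) =
      ((volume : Measure (EuclideanSpace ℝ (Fin d))).toSphere Set.univ)⁻¹ •
        (volume : Measure (EuclideanSpace ℝ (Fin d))).toSphere.map Subtype.val := by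
  have hS : l2Sphere d = Metric.sphere (0 : EuclideanSpace ℝ (Fin d)) 1 := by
    ext u; simp [l2Sphere]
  have hfr : Module.finrank ℝ (EuclideanSpace ℝ (Fin d)) = (d - 1) + 1 := by
    rw [finrank_euclideanSpace_fin]; omega
  have : Nontrivial (EuclideanSpace ℝ (Fin d)) :=
    Module.nontrivial_of_finrank_pos (R := ℝ) (by omega)
  have hcast : (d : ℝ) - 1 = ((d - 1 : ℕ) : ℝ) := by rw [Nat.cast_sub hd]; simp
  have hpos := aux_sphere_pos _ hfr
  have hfin := aux_sphere_finite _ hfr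
  rw [← hcast] at hpos hfin
  have hms : MeasurableSet (Metric.sphere (0 : EuclideanSpace ℝ (Fin d)) 1) :=
    Metric.isClosed_sphere.measurableSet
  have hτ0 : (volume : Measure (EuclideanSpace ℝ (Fin d))).toSphere Set.univ ≠ 0 := by
    rw [Ne, Measure.measure_univ_eq_zero]
    exact Measure.toSphere_ne_zero _
  unfold uniformOnSphere
  rw [hS]
  have hp1 : IsProbabilityMeasure
      ((μH[(d : ℝ) - 1] (Metric.sphere (0 : EuclideanSpace ℝ (Fin d)) 1))⁻¹
      • (μH[(d : ℝ) - 1]).restrict (Metric.sphere (0 : EuclideanSpace ℝ (Fin d)) 1)) := by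
    constructor
    rw [Measure.smul_apply, Measure.restrict_apply_univ, smul_eq_mul]
    exact ENNReal.inv_mul_cancel hpos.ne' hfin.ne
  have hp2 : IsProbabilityMeasure
      (((volume : Measure (EuclideanSpace ℝ (Fin d))).toSphere Set.univ)⁻¹ •
        (volume : Measure (EuclideanSpace ℝ (Fin d))).toSphere.map Subtype.val) := by
    constructor
    rw [Measure.smul_apply, Measure.map_apply measurable_subtype_coe .univ, smul_eq_mul,
      Set.preimage_univ]
    exact ENNReal.inv_mul_cancel hτ0 (measure_ne_top _ _)
  refine aux_unique _ _ ?_ ?_ ?_ ?_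
  · exact Measure.ae_smul_measure (ae_restrict_mem hms) _
  · refine Measure.ae_smul_measure ?_ _
    refine (ae_map_iff measurable_subtype_coe.aemeasurable hms).2 ?_
    exact .of_forall fun e => e.2
  · intro x hx y hy r
    rw [Measure.smul_apply, Measure.smul_apply, Measure.restrict_apply measurableSet_ball,
      Measure.restrict_apply measurableSet_ball, aux_hausdorff_ball _ x y hx hy]
  · intro x hx y hy r
    rw [Measure.smul_apply, Measure.smul_apply,
      Measure.map_apply measurable_subtype_coe measurableSet_ball,
      Measure.map_apply measurable_subtype_coe measurableSet_ball, aux_toSphere_ball x y hx hy]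

/-- The Euclidean-ball smoothing `f_γ` of an `M`-Lipschitz function `f` is
differentiable, with gradient `∇f_γ(x) = E_e[(d/γ)·f(x+γe)·e]`, `e` uniform on the Euclidean
unit sphere. -/
theorem l2_smoothing_gradient_formula {d : ℕ} (hd : 1 ≤ d) (γ M : ℝ) (hγ : 0 < γ)
    (f fγ : EuclideanSpace ℝ (Fin d) → ℝ)
    (hlip : ∀ x y : EuclideanSpace ℝ (Fin d), |f y - f x| ≤ M * ‖y - x‖)
    (hfγ : ∀ x, fγ x = ∫ e, f (x + γ • e) ∂(uniformOn (l2Ball d)))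
    (x : EuclideanSpace ℝ (Fin d)) :
    HasGradientAt fγ
      (∫ e, (d / γ * f (x + γ • e)) • e ∂(uniformOnSphere (l2Sphere d))) x := by
  have hfr : Module.finrank ℝ (EuclideanSpace ℝ (Fin d)) = d := finrank_euclideanSpace_fin
  have : Nontrivial (EuclideanSpace ℝ (Fin d)) :=
    Module.nontrivial_of_finrank_pos (R := ℝ) (by omega)
  have hB : l2Ball d = Metric.closedBall (0 : EuclideanSpace ℝ (Fin d)) 1 := by
    ext u; simp [l2Ball]
  have hf : Continuous f := by
    have : LipschitzWith M.toNNReal f := by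
      refine LipschitzWith.of_dist_le_mul fun a b => ?_
      rw [Real.dist_eq, dist_eq_norm]
      refine (hlip b a).trans ?_
      gcongr
      exact Real.le_coe_toNNReal M
    exact this.continuous
  set g : EuclideanSpace ℝ (Fin d) → ℝ := fun u => f (x + γ • u) with hgdef
  have hg : Continuous g := by fun_prop
  have hmain := (aux_main g hg).hasFDerivAt
  set V : ℝ := (volume : Measure (EuclideanSpace ℝ (Fin d))).real (Metric.ball 0 1) with hV
  have hVc : (volume (Metric.closedBall (0 : EuclideanSpace ℝ (Fin d)) 1)).toReal = V := by
    rw [Measure.addHaar_closedBall_eq_addHaar_ball]; rfl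
  have hVpos : 0 < V := ENNReal.toReal_pos (Metric.measure_ball_pos _ _ one_pos).ne'
    measure_ball_lt_top.ne
  set G := ∫ e : Metric.sphere (0 : EuclideanSpace ℝ (Fin d)) 1,
    g e • (e : EuclideanSpace ℝ (Fin d))
    ∂(volume : Measure (EuclideanSpace ℝ (Fin d))).toSphere with hG
  have hd0 : (d : ℝ) ≠ 0 := by positivity
  have hgrad : (∫ e, (d / γ * f (x + γ • e)) • e ∂(uniformOnSphere (l2Sphere d)))
      = (V⁻¹ * γ⁻¹) • G := by
    rw [aux_uniform_eq hd, integral_smul_measure,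
      (MeasurableEmbedding.subtype_coe Metric.isClosed_sphere.measurableSet).integral_map]
    simp only [mul_smul]
    rw [integral_smul, hG, smul_smul, smul_smul, ENNReal.toReal_inv]
    congr 1
    have h := (volume : Measure (EuclideanSpace ℝ (Fin d))).toSphere_real_apply_univ
    rw [hfr, Measure.real] at h
    rw [h, ← hV]
    field_simp
  rw [hgrad]
  have hform : fγ = fun z =>
      V⁻¹ * (fun y => ∫ u in Metric.closedBall (0 : EuclideanSpace ℝ (Fin d)) 1,
      g (y + u)) (γ⁻¹ • (z - x)) := by
    funext z
    rw [hfγ, uniformOn, hB, integral_smul_measure, ENNReal.toReal_inv, hVc, smul_eq_mul]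
    congr 2
    funext u
    simp only [hgdef]
    congr 1
    rw [smul_add, smul_smul, mul_inv_cancel₀ hγ.ne', one_smul]
    abel
  have hin : HasFDerivAt (fun z : EuclideanSpace ℝ (Fin d) => γ⁻¹ • (z - x))
      (γ⁻¹ • ContinuousLinearMap.id ℝ (EuclideanSpace ℝ (Fin d))) x :=
    ((hasFDerivAt_id x).sub_const x).const_smul γ⁻¹
  have h0 : γ⁻¹ • (x - x) = (0 : EuclideanSpace ℝ (Fin d)) := by simp
  have hmain' : HasFDerivAt (fun y => ∫ u in Metric.closedBall (0 : EuclideanSpace ℝ (Fin d)) 1,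
      g (y + u)) ((InnerProductSpace.toDual ℝ (EuclideanSpace ℝ (Fin d))) G) (γ⁻¹ • (x - x)) := by
    rw [h0]; exact hmain
  have hcomp := (HasFDerivAt.comp x hmain' hin).const_mul V⁻¹
  rw [hform, hasGradientAt_iff_hasFDerivAt]
  refine hcomp.congr_fderiv ?_
  ext v
  simp [inner_smul_left]
  ring
end

section
/- Let d ≥ 1, ε > 0, and let f : ℝ^d → ℝ be convex and M₂-Lipschitz with respect to the l₂-norm, attaining its minimum at x*. Let γ = √d·ε/(4M₂) and let f_γ(x) := E[f(x + γ·ẽ)], where ẽ is uniformly distributed on the unit l₁-ball B₁^d(1). Then for any point x̂ satisfying f_γ(x̂) − inf_{x} f_γ(x) ≤ ε/2, one has f(x̂) − f(x*) ≤ ε. -/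
open MeasureTheory
open scoped ENNReal RealInnerProductSpace

section
open scoped Pointwise


lemma l1aux_norm_le {d : ℕ} (u : EuclideanSpace ℝ (Fin d)) : ‖u‖ ≤ ∑ i, |u i| := by
  rw [EuclideanSpace.norm_eq]
  apply Real.sqrt_le_iff.2
  refine ⟨Finset.sum_nonneg fun i _ => abs_nonneg _, ?_⟩
  simp only [Real.norm_eq_abs]
  exact Finset.sum_sq_le_sq_sum_of_nonneg fun i _ => abs_nonneg _

lemma l1aux_closed (d : ℕ) : IsClosed (l1Ball d) := by
  unfold l1Ball
  exact isClosed_le (by fun_prop) continuous_const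

lemma l1aux_compact (d : ℕ) : IsCompact (l1Ball d) := by
  refine (isCompact_closedBall (0 : EuclideanSpace ℝ (Fin d)) 1).of_isClosed_subset
    (l1aux_closed d) ?_
  intro u hu
  rw [mem_closedBall_zero_iff]
  exact (l1aux_norm_le u).trans hu

lemma l1aux_vol_ne_top (d : ℕ) : volume (l1Ball d) ≠ ∞ := (l1aux_compact d).measure_lt_top.ne

lemma l1aux_vol_ne_zero (d : ℕ) : volume (l1Ball d) ≠ 0 := by
  have ho : IsOpen {u : EuclideanSpace ℝ (Fin d) | ∑ i, |u i| < 1} :=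
    isOpen_lt (by fun_prop) continuous_const
  have := ho.measure_pos volume ⟨0, by simp⟩
  refine (this.trans_le (measure_mono ?_)).ne'
  intro u hu
  have hu' : ∑ i, |u i| < 1 := hu
  exact hu'.le

instance l1aux_prob (d : ℕ) : IsProbabilityMeasure (uniformOn (l1Ball d)) := by
  constructor
  simp only [uniformOn, Measure.smul_apply, Measure.restrict_apply_univ, smul_eq_mul]
  exact ENNReal.inv_mul_cancel (l1aux_vol_ne_zero d) (l1aux_vol_ne_top d)

lemma l1aux_integrable {d : ℕ} {g : EuclideanSpace ℝ (Fin d) → ℝ} (hg : Continuous g) :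
    Integrable g (uniformOn (l1Ball d)) := by
  unfold uniformOn
  refine Integrable.smul_measure ?_ (ENNReal.inv_ne_top.2 (l1aux_vol_ne_zero d))
  exact hg.continuousOn.integrableOn_compact (l1aux_compact d)

lemma l1aux_integral_neg {d : ℕ} (g : EuclideanSpace ℝ (Fin d) → ℝ) :
    ∫ e, g (-e) ∂(uniformOn (l1Ball d)) = ∫ e, g e ∂(uniformOn (l1Ball d)) := by
  unfold uniformOn
  rw [integral_smul_measure, integral_smul_measure]
  congr 1
  rw [← integral_indicator (l1aux_closed d).measurableSet,
    ← integral_indicator (l1aux_closed d).measurableSet,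
    ← integral_neg_eq_self ((l1Ball d).indicator g)]
  congr 1
  ext e
  have : -e ∈ l1Ball d ↔ e ∈ l1Ball d := by simp [l1Ball]
  by_cases h : e ∈ l1Ball d
  · rw [Set.indicator_of_mem h, Set.indicator_of_mem (this.2 h)]
  · rw [Set.indicator_of_notMem h, Set.indicator_of_notMem (fun h' => h (this.1 h'))]

def l1auxHalf (d : ℕ) (i : Fin d) (t : ℝ) : Set (EuclideanSpace ℝ (Fin d)) :=
  {u | ∑ j, |u j| ≤ 1 ∧ t < u i}

lemma l1aux_half_scale {d : ℕ} (i : Fin d) {t : ℝ} (h0 : 0 ≤ t) (h1 : t < 1) :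
    volume (l1auxHalf d i t) ≤ ENNReal.ofReal ((1 - t) ^ d) * volume (l1auxHalf d i 0) := by
  have hpos : 0 < 1 - t := by linarith
  have hsub : l1auxHalf d i t ⊆
      (fun x => EuclideanSpace.single i t + x) '' ((1 - t) • l1auxHalf d i 0) := by
    rintro u ⟨hu, hui⟩
    refine ⟨u - EuclideanSpace.single i t, ?_, by simp⟩
    rw [Set.mem_smul_set_iff_inv_smul_mem₀ hpos.ne']
    refine ⟨?_, ?_⟩
    · have hkey : ∑ j, |(u - EuclideanSpace.single i t) j| ≤ 1 - t := by
        rw [← Finset.add_sum_erase _ _ (Finset.mem_univ i)] at hu ⊢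
        have h2 : ∑ j ∈ Finset.univ.erase i, |(u - EuclideanSpace.single i t) j|
            = ∑ j ∈ Finset.univ.erase i, |u j| := by
          refine Finset.sum_congr rfl fun j hj => ?_
          simp [Finset.ne_of_mem_erase hj]
        rw [h2]
        have h3 : |(u - EuclideanSpace.single i t) i| = |u i| - t := by
          simp only [PiLp.sub_apply, PiLp.single_apply, if_true]
          rw [abs_of_pos (by linarith), abs_of_pos (by linarith)]
        rw [h3]; linarith
      have : ∑ j, |((1 - t)⁻¹ • (u - EuclideanSpace.single i t)) j|
          = (1 - t)⁻¹ * ∑ j, |(u - EuclideanSpace.single i t) j| := by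
        rw [Finset.mul_sum]
        refine Finset.sum_congr rfl fun j _ => ?_
        rw [PiLp.smul_apply, smul_eq_mul, abs_mul, abs_of_pos (inv_pos.2 hpos)]
      rw [this, inv_mul_le_iff₀ hpos]
      linarith
    · have : 0 < (1 - t)⁻¹ * (u i - t) := mul_pos (inv_pos.2 hpos) (by linarith)
      simpa using this
  refine (measure_mono hsub).trans ?_
  rw [Set.image_add_left, measure_preimage_add, Measure.addHaar_smul]
  simp [abs_of_pos hpos]

lemma l1aux_half_neg {d : ℕ} (i : Fin d) (t : ℝ) :
    volume {u : EuclideanSpace ℝ (Fin d) | ∑ j, |u j| ≤ 1 ∧ t < - u i} =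
      volume (l1auxHalf d i t) := by
  rw [← Measure.measure_neg volume (l1auxHalf d i t)]
  congr 1
  ext u
  simp [l1auxHalf]

lemma l1aux_half_meas {d : ℕ} (i : Fin d) (t : ℝ) : MeasurableSet (l1auxHalf d i t) := by
  unfold l1auxHalf
  have h2 : IsOpen {u : EuclideanSpace ℝ (Fin d) | t < u i} :=
    isOpen_lt continuous_const (by fun_prop)
  exact (l1aux_closed d).measurableSet.inter h2.measurableSet

lemma l1aux_two_half {d : ℕ} (i : Fin d) :
    volume (l1auxHalf d i 0) + volume (l1auxHalf d i 0) ≤ volume (l1Ball d) := by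
  nth_rewrite 1 [← l1aux_half_neg]
  rw [← measure_union _ (l1aux_half_meas i 0)]
  · apply measure_mono
    rintro u (hu | hu)
    · exact hu.1
    · exact hu.1
  · rw [Set.disjoint_left]
    rintro u hu hu'
    have := hu.2
    have := hu'.2
    linarith

lemma l1aux_tail {d : ℕ} (i : Fin d) {t : ℝ} (h0 : 0 ≤ t) (h1 : t < 1) :
    uniformOn (l1Ball d) {u | t < |u i|} ≤ ENNReal.ofReal ((1 - t) ^ d) := by
  simp only [uniformOn, Measure.smul_apply, smul_eq_mul]
  rw [Measure.restrict_apply (isOpen_lt continuous_const (by fun_prop)).measurableSet]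
  have h : volume ({u : EuclideanSpace ℝ (Fin d) | t < |u i|} ∩ l1Ball d) ≤
      volume (l1Ball d) * ENNReal.ofReal ((1 - t) ^ d) := by
    calc _ ≤ volume (l1auxHalf d i t ∪
          {u : EuclideanSpace ℝ (Fin d) | ∑ j, |u j| ≤ 1 ∧ t < - u i}) := by
          apply measure_mono
          rintro u ⟨hu, hu'⟩
          have hu2 : t < |u i| := hu
          rcases lt_abs.1 hu2 with h | h
          · exact Or.inl ⟨hu', h⟩
          · exact Or.inr ⟨hu', h⟩
      _ ≤ _ := measure_union_le _ _
      _ = volume (l1auxHalf d i t) + volume (l1auxHalf d i t) := by rw [l1aux_half_neg]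
      _ ≤ _ := add_le_add (l1aux_half_scale i h0 h1) (l1aux_half_scale i h0 h1)
      _ = (volume (l1auxHalf d i 0) + volume (l1auxHalf d i 0)) *
          ENNReal.ofReal ((1 - t) ^ d) := by ring
      _ ≤ _ := by gcongr; exact l1aux_two_half i
  calc _ ≤ (volume (l1Ball d))⁻¹ * (volume (l1Ball d) * ENNReal.ofReal ((1 - t) ^ d)) := by
        gcongr
    _ = _ := by
        rw [← mul_assoc, ENNReal.inv_mul_cancel (l1aux_vol_ne_zero d) (l1aux_vol_ne_top d),
          one_mul]

lemma l1aux_tail' {d : ℕ} (i : Fin d) {t : ℝ} (h1 : 1 ≤ t) :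
    uniformOn (l1Ball d) {u | t < |u i|} = 0 := by
  simp only [uniformOn, Measure.smul_apply, smul_eq_mul]
  rw [Measure.restrict_apply (isOpen_lt continuous_const (by fun_prop)).measurableSet]
  have : ({u : EuclideanSpace ℝ (Fin d) | t < |u i|} ∩ l1Ball d) = ∅ := by
    ext u
    simp only [Set.mem_inter_iff, Set.mem_ofPred_eq, l1Ball, Set.mem_empty_iff_false, iff_false,
      not_and]
    intro h h'
    have := Finset.single_le_sum (f := fun j => |u j|) (fun j _ => abs_nonneg _)
      (Finset.mem_univ i)
    simp only at this
    linarith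
  simp [this]

lemma l1aux_beta (d : ℕ) :
    ∫ t in (0:ℝ)..1, (1 - t) ^ d * t = 1 / (((d:ℝ) + 1) * (d + 2)) := by
  have h := intervalIntegral.integral_comp_sub_left (a := 0) (b := 1)
    (fun t : ℝ => t ^ d * (1 - t)) 1
  simp only [sub_sub_cancel, sub_self, sub_zero] at h
  rw [h]
  have : (fun t : ℝ => t ^ d * (1 - t)) = fun t => t ^ d - t ^ (d + 1) := by
    ext t; ring
  rw [this, intervalIntegral.integral_sub (by apply Continuous.intervalIntegrable; fun_prop) (by apply Continuous.intervalIntegrable; fun_prop),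
    integral_pow, integral_pow]
  have h1 : (d : ℝ) + 1 ≠ 0 := by positivity
  have h2 : (d : ℝ) + 2 ≠ 0 := by positivity
  have h3 : (d : ℝ) + 1 + 1 ≠ 0 := by positivity
  push_cast
  simp
  field_simp
  ring

lemma l1aux_sq {d : ℕ} (i : Fin d) :
    ∫ e, (e i) ^ 2 ∂(uniformOn (l1Ball d)) ≤ 2 / (((d:ℝ) + 1) * (d + 2)) := by
  have hc : Continuous fun e : EuclideanSpace ℝ (Fin d) => |e i| := by fun_prop
  have h := lintegral_rpow_eq_lintegral_meas_lt_mul (uniformOn (l1Ball d))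
    (f := fun e => |e i|) (Filter.Eventually.of_forall fun e => abs_nonneg _)
    hc.measurable.aemeasurable (p := 2) two_pos
  rw [integral_eq_lintegral_of_nonneg_ae (Filter.Eventually.of_forall fun e => sq_nonneg _)
    (by apply Continuous.aestronglyMeasurable; fun_prop)]
  apply ENNReal.toReal_le_of_le_ofReal (by positivity)
  have e1 : ∀ e : EuclideanSpace ℝ (Fin d), (e i) ^ 2 = |e i| ^ (2:ℝ) := by
    intro e; simp
  simp_rw [e1]
  rw [h]
  have hb : ∫⁻ t in Set.Ioi (0:ℝ), uniformOn (l1Ball d) {a | t < |a i|} *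
      ENNReal.ofReal (t ^ ((2:ℝ) - 1)) ≤ ENNReal.ofReal (1 / (((d:ℝ) + 1) * (d + 2))) := by
    rw [← l1aux_beta, intervalIntegral.integral_of_le zero_le_one,
      ofReal_integral_eq_lintegral_ofReal]
    · rw [← lintegral_indicator measurableSet_Ioi, ← lintegral_indicator measurableSet_Ioc]
      apply lintegral_mono
      intro t
      simp only
      by_cases ht : 0 < t
      · rw [Set.indicator_of_mem (by exact ht)]
        have e2 : t ^ ((2:ℝ) - 1) = t := by norm_num
        rw [e2]
        by_cases ht1 : t < 1
        · rw [Set.indicator_of_mem (Set.mem_Ioc.2 ⟨ht, ht1.le⟩),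
            ENNReal.ofReal_mul (pow_nonneg (by linarith) _)]
          gcongr
          exact l1aux_tail i ht.le ht1
        · rw [l1aux_tail' i (not_lt.1 ht1)]
          simp
      · rw [Set.indicator_of_notMem (by exact ht)]
        exact zero_le
    · apply IntegrableOn.integrable
      exact (Continuous.integrableOn_Ioc (by fun_prop))
    · refine (ae_restrict_iff' measurableSet_Ioc).2 (Filter.Eventually.of_forall fun t ht => ?_)
      exact mul_nonneg (pow_nonneg (by linarith [ht.2]) _) ht.1.le
  calc _ ≤ ENNReal.ofReal 2 * ENNReal.ofReal (1 / (((d:ℝ) + 1) * (d + 2))) := by gcongr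
    _ = _ := by
      rw [← ENNReal.ofReal_mul (by norm_num)]
      congr 1
      ring

lemma l1aux_normsq {d : ℕ} (hd : 1 ≤ d) :
    ∫ e, ‖e‖ ^ 2 ∂(uniformOn (l1Ball d)) ≤ 2 / (d:ℝ) := by
  have hd' : (0:ℝ) < d := by exact_mod_cast hd
  simp_rw [EuclideanSpace.norm_sq_eq, Real.norm_eq_abs, sq_abs]
  rw [integral_finsetSum _ (fun i _ => l1aux_integrable (by fun_prop))]
  calc _ ≤ ∑ i : Fin d, 2 / (((d:ℝ) + 1) * (d + 2)) := Finset.sum_le_sum fun i _ => l1aux_sq i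
    _ = d * (2 / (((d:ℝ) + 1) * (d + 2))) := by simp
    _ ≤ _ := by
      rw [← mul_div_assoc, div_le_div_iff₀ (by positivity) hd']
      nlinarith

end

/-- With `γ = √d·ε/(4M₂)`, an `ε/2`-approximate minimizer of the
`l₁`-smoothed function `f_γ` is an `ε`-approximate minimizer of `f`. -/
theorem l1_smoothing_accuracy_transfer {d : ℕ} (hd : 1 ≤ d) (ε M₂ γ : ℝ)
    (hε : 0 < ε) (hM₂ : 0 < M₂)
    (f fγ : EuclideanSpace ℝ (Fin d) → ℝ)
    (hconv : ConvexOn ℝ Set.univ f)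
    (hlip : ∀ x y : EuclideanSpace ℝ (Fin d), |f y - f x| ≤ M₂ * ‖y - x‖)
    (xstar : EuclideanSpace ℝ (Fin d)) (hmin : ∀ x, f xstar ≤ f x)
    (hγ : γ = Real.sqrt d * ε / (4 * M₂))
    (hfγ : ∀ x, fγ x = ∫ e, f (x + γ • e) ∂(uniformOn (l1Ball d)))
    (xhat : EuclideanSpace ℝ (Fin d))
    (hxhat : fγ xhat - ⨅ x, fγ x ≤ ε / 2) :
    f xhat - f xstar ≤ ε := by
  have hd' : (0:ℝ) < d := by exact_mod_cast hd
  have hs : 0 < Real.sqrt d := Real.sqrt_pos.2 hd'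
  have hss : Real.sqrt d * Real.sqrt d = d := Real.mul_self_sqrt hd'.le
  have hγ0 : 0 < γ := by rw [hγ]; positivity
  have hcont : Continuous f := by
    refine (LipschitzWith.of_dist_le_mul (K := ⟨M₂, hM₂.le⟩) fun x y => ?_).continuous
    rw [Real.dist_eq, dist_eq_norm]
    exact hlip y x
  have hint : ∀ (x : EuclideanSpace ℝ (Fin d)) (c : ℝ),
      Integrable (fun e => f (x + c • e)) (uniformOn (l1Ball d)) :=
    fun x c => l1aux_integrable (by fun_prop)
  have hlow : ∀ x, f x ≤ fγ x := by
    intro x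
    have h1 := l1aux_integral_neg (d := d) (fun e => f (x + γ • e))
    have hi2 : Integrable (fun e => f (x + γ • -e)) (uniformOn (l1Ball d)) :=
      l1aux_integrable (by fun_prop)
    have h2 : ∫ _e, 2 * f x ∂(uniformOn (l1Ball d)) ≤
        ∫ e, (f (x + γ • e) + f (x + γ • -e)) ∂(uniformOn (l1Ball d)) := by
      refine integral_mono (integrable_const _) ((hint x γ).add hi2) fun e => ?_
      have := hconv.2 (Set.mem_univ (x + γ • e)) (Set.mem_univ (x + γ • -e))
        (by norm_num : (0:ℝ) ≤ 1/2) (by norm_num : (0:ℝ) ≤ 1/2) (by norm_num)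
      have hx : (1/2 : ℝ) • (x + γ • e) + (1/2 : ℝ) • (x + γ • -e) = x := by
        module
      rw [hx] at this
      simp only [smul_eq_mul] at this ⊢
      linarith
    rw [integral_add (hint x γ) hi2, h1, ← hfγ] at h2
    simp at h2
    linarith
  have hbdd : BddBelow (Set.range fγ) :=
    ⟨f xstar, by rintro _ ⟨x, rfl⟩; exact (hmin x).trans (hlow x)⟩
  have hinf : ⨅ x, fγ x ≤ fγ xstar := ciInf_le hbdd xstar
  have hup : fγ xstar ≤ f xstar + ε / 2 := by
    have hi3 : Integrable (fun e : EuclideanSpace ℝ (Fin d) => ‖e‖ ^ 2)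
        (uniformOn (l1Ball d)) := l1aux_integrable (by fun_prop)
    have h1 : fγ xstar ≤ ∫ e, ((f xstar + ε / 8) + (d * ε / 8) * ‖e‖ ^ 2)
        ∂(uniformOn (l1Ball d)) := by
      rw [hfγ]
      refine integral_mono (hint _ _) ((integrable_const _).add (hi3.const_mul _)) fun e => ?_
      have h := (le_abs_self _).trans (hlip xstar (xstar + γ • e))
      rw [add_sub_cancel_left, norm_smul, Real.norm_eq_abs, abs_of_pos hγ0] at h
      have h2 : M₂ * (γ * ‖e‖) = ε / 4 * (Real.sqrt d * ‖e‖) := by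
        rw [hγ]; field_simp
      have h3 : Real.sqrt d * ‖e‖ ≤ 1 / 2 + d * ‖e‖ ^ 2 / 2 := by
        have := sq_nonneg (Real.sqrt d * ‖e‖ - 1)
        have h4 : (Real.sqrt d * ‖e‖) ^ 2 = d * ‖e‖ ^ 2 := by
          rw [mul_pow, sq (Real.sqrt d), hss]
        nlinarith
      have h5 := mul_le_mul_of_nonneg_left h3 (by positivity : 0 ≤ ε / 4)
      simp only
      linarith
    rw [integral_add (integrable_const _) (hi3.const_mul _), integral_const_mul] at h1
    have h6 := mul_le_mul_of_nonneg_left (l1aux_normsq hd) (by positivity : 0 ≤ d * ε / 8)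
    have h7 : d * ε / 8 * (2 / (d:ℝ)) = ε / 4 := by field_simp; norm_num
    simp at h1
    linarith
  have := hlow xhat
  linarith
end
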